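/- With N defined by the recursion of the paper, N d (3d-4) 3 0 equals the classical Kontsevich number of rational degree-d plane curves through 3d-1 generic points, for d = 3 and d = 4; that is, N 3 5 3 0 = 12 and N 4 8 3 0 = 620. -/

import Mathlib

open Finset

/-- Base table for d = 1 (Lemma 3.1): N 1 r s θ. -/
def Ntab1 : ℕ → ℕ → ℕ → ℤ
  | 0, 2, 1 => 1
  | 2, 1, 1 => 1
  | 4, 0, 1 => 2
  | 1, 1, 2 => 1
  | 3, 0, 2 => 2
  | 2, 0, 3 => 1
  | _, _, _ => 0

/-- Base table for d = 2 (Lemma 3.2): N 2 r s θ. -/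
def Ntab2 : ℕ → ℕ → ℕ → ℤ
  | 8, 0, 0 => 92
  | 6, 1, 0 => 18
  | 4, 2, 0 => 4
  | 2, 3, 0 => 1
  | 7, 0, 1 => 34
  | 5, 1, 1 => 6
  | 3, 2, 1 => 1
  | 6, 0, 2 => 8
  | 4, 1, 2 => 1
  | 5, 0, 3 => 1
  | _, _, _ => 0

/-- The recursively defined count `N d r s θ` of rational planar degree-d curves in P³
through r generic lines and s generic points, with θ linear constraints on the plane.
For d ≥ 3 it is 0 unless r + 2s + θ = 3d + 2, s ≤ 3 and θ ≤ 3, and otherwise it is given by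
the WDVV-type recursion of Theorem 3.3, where the quantity
B d₁ d₂ r₁ s₁ r₂ s₂ θ = Σ_{i=0}^{3} N d₁ r₁ s₁ i · N d₂ r₂ s₂ (θ+3-i) is inlined. -/
def N : ℕ → ℕ → ℕ → ℕ → ℤ
  | 0, _, _, _ => 0
  | 1, r, s, θ => Ntab1 r s θ
  | 2, r, s, θ => Ntab2 r s θ
  | (d + 3), r, s, θ =>
    if h : r + 2 * s + θ ≠ 3 * (d + 3) + 2 ∨ s > 3 ∨ θ > 3 then 0
    else
      2 * (d + 3) * N (d + 3) (r - 2) (s + 1) θ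
      + ∑ r1 ∈ Finset.range (r - 3 + 1), ∑ s1 ∈ Finset.range (s + 1),
          ∑ d1 ∈ (Finset.Icc 1 (d + 2)).attach,
            ((r - 3).choose r1 : ℤ) * (s.choose s1 : ℤ) * (d1.1 : ℤ) ^ 2 * ((d + 3 - d1.1 : ℕ) : ℤ) *
              (((d + 3 - d1.1 : ℕ) : ℤ) *
                  (∑ i ∈ Finset.range 4,
                    N d1.1 (r1 + 1) s1 i * N (d + 3 - d1.1) (r - r1 - 2) (s - s1) (θ + 3 - i))
                - (d1.1 : ℤ) *
                  (∑ i ∈ Finset.range 4,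
                    N d1.1 r1 s1 i * N (d + 3 - d1.1) (r - r1 - 1) (s - s1) (θ + 3 - i)))
  termination_by d r s θ => (d, 4 - s)
  decreasing_by
  all_goals push_neg at h
  · exact Prod.Lex.right _ (by omega)
  all_goals
    have hd := d1.2
    simp only [Finset.mem_Icc] at hd
    exact Prod.Lex.left _ _ (by omega)

/-- B d₁ d₂ r₁ s₁ r₂ s₂ θ = Σ_{i=0}^{3} N d₁ r₁ s₁ i · N d₂ r₂ s₂ (θ + 3 - i). -/
def B (d1 d2 r1 s1 r2 s2 θ : ℕ) : ℤ :=
  ∑ i ∈ Finset.range 4, N d1 r1 s1 i * N d2 r2 s2 (θ + 3 - i)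

/-- Fuel-based structurally recursive version of `N`, for kernel evaluation. -/
def NFuel : ℕ → ℕ → ℕ → ℕ → ℕ → ℤ
  | 0, _, _, _, _ => 0
  | _ + 1, 0, _, _, _ => 0
  | _ + 1, 1, r, s, θ => Ntab1 r s θ
  | _ + 1, 2, r, s, θ => Ntab2 r s θ
  | f + 1, (d + 3), r, s, θ =>
    if r + 2 * s + θ ≠ 3 * (d + 3) + 2 ∨ s > 3 ∨ θ > 3 then 0
    else
      2 * (d + 3) * NFuel f (d + 3) (r - 2) (s + 1) θ
      + ∑ r1 ∈ Finset.range (r - 3 + 1), ∑ s1 ∈ Finset.range (s + 1),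
          ∑ d1 ∈ Finset.Icc 1 (d + 2),
            ((r - 3).choose r1 : ℤ) * (s.choose s1 : ℤ) * (d1 : ℤ) ^ 2 * ((d + 3 - d1 : ℕ) : ℤ) *
              (((d + 3 - d1 : ℕ) : ℤ) *
                  (∑ i ∈ Finset.range 4,
                    NFuel f d1 (r1 + 1) s1 i * NFuel f (d + 3 - d1) (r - r1 - 2) (s - s1) (θ + 3 - i))
                - (d1 : ℤ) *
                  (∑ i ∈ Finset.range 4,
                    NFuel f d1 r1 s1 i * NFuel f (d + 3 - d1) (r - r1 - 1) (s - s1) (θ + 3 - i)))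

theorem N_eq_NFuel (f : ℕ) : ∀ d r s θ : ℕ, 5 * d + (4 - s) < f → N d r s θ = NFuel f d r s θ := by
  induction f with
  | zero => intro d r s θ h; omega
  | succ f ih =>
    intro d r s θ hf
    match d, hf with
    | 0, _ => rw [N, NFuel]
    | 1, _ => rw [N, NFuel]
    | 2, _ => rw [N, NFuel]
    | d + 3, hf =>
      rw [N, NFuel]
      by_cases h : r + 2 * s + θ ≠ 3 * (d + 3) + 2 ∨ s > 3 ∨ θ > 3
      · rw [dif_pos h, if_pos h]
      · rw [dif_neg h, if_neg h]
        have hs : s ≤ 3 := by omega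
        rw [ih (d + 3) (r - 2) (s + 1) θ (by omega)]
        congr 1
        refine Finset.sum_congr rfl fun r1 _ => Finset.sum_congr rfl fun s1 _ => ?_
        rw [← Finset.sum_attach (Finset.Icc 1 (d + 2))]
        refine Finset.sum_congr rfl fun d1 _ => ?_
        have hd := Finset.mem_Icc.mp d1.2
        have e1 : ∀ a b c, N d1.1 a b c = NFuel f d1.1 a b c :=
          fun a b c => ih _ _ _ _ (by omega)
        have e2 : ∀ a b c, N (d + 3 - d1.1) a b c = NFuel f (d + 3 - d1.1) a b c :=
          fun a b c => ih _ _ _ _ (by omega)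
        simp only [e1, e2]

/-- N d (3d-4) 3 0 equals the Kontsevich number of rational degree-d plane curves through
3d - 1 generic points, for d = 3 and d = 4: N 3 5 3 0 = 12 and N 4 8 3 0 = 620. -/
theorem stmt10 : N 3 5 3 0 = 12 ∧ N 4 8 3 0 = 620 := by
  rw [N_eq_NFuel 30 3 5 3 0 (by norm_num), N_eq_NFuel 30 4 8 3 0 (by norm_num)]
  decide +kernel
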